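/- There exist a natural number n and a simple (non-weak) pseudoline arrangement (L₁, …, Lₙ) in ℝ² that is not realizable by circular arcs: there is no open disk D ⊆ ℝ², no family γ₁, …, γₙ of subsets of ℝ² in which each γᵢ is either a circle or a straight line, and no homeomorphism h from ℝ² onto D with h(Lᵢ) = γᵢ ∩ D for every i. -/

import Mathlib

open Set

/-- The Euclidean plane. -/
abbrev Plane := EuclideanSpace ℝ (Fin 2)

/-- A straight line in the plane. -/
def IsLine (S : Set Plane) : Prop :=
  ∃ a u : Plane, u ≠ 0 ∧ S = {p | ∃ t : ℝ, p = a + t • u}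

/-- A pseudoline: image of a straight line under a self-homeomorphism of the plane. -/
def IsPseudoline (L : Set Plane) : Prop :=
  ∃ (h : Plane ≃ₜ Plane) (ℓ : Set Plane), IsLine ℓ ∧ L = h '' ℓ

/-- Two curves cross at `p`: `p` lies on both, and each of them meets every
connected component of the complement of the other. -/
def CrossAt (L M : Set Plane) (p : Plane) : Prop :=
  p ∈ L ∩ M ∧
  (∀ x ∈ Mᶜ, (L ∩ connectedComponentIn Mᶜ x).Nonempty) ∧
  (∀ x ∈ Lᶜ, (M ∩ connectedComponentIn Lᶜ x).Nonempty)

/-- A weak pseudoline arrangement: pairwise distinct pseudolines, any two of which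
intersect in at most one point, and cross wherever they intersect. -/
def IsWeakArrangement {n : ℕ} (L : Fin n → Set Plane) : Prop :=
  Function.Injective L ∧
  (∀ i, IsPseudoline (L i)) ∧
  (∀ i j, i ≠ j → (L i ∩ L j).Subsingleton) ∧
  (∀ i j, i ≠ j → ∀ p ∈ L i ∩ L j, CrossAt (L i) (L j) p)

/-- A (non-weak) pseudoline arrangement: a weak arrangement in which any two
pseudolines intersect (in exactly one point, where they cross). -/
def IsArrangement {n : ℕ} (L : Fin n → Set Plane) : Prop :=
  IsWeakArrangement L ∧ ∀ i j, i ≠ j → (L i ∩ L j).Nonempty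

/-- Simplicity: no point lies on three distinct pseudolines of the family. -/
def IsSimple {n : ℕ} (L : Fin n → Set Plane) : Prop :=
  ∀ (p : Plane) (i j k : Fin n),
    p ∈ L i → p ∈ L j → p ∈ L k → i = j ∨ i = k ∨ j = k

/-- Outerplanarity: every intersection point of two pseudolines of the family lies
in the closure of some unbounded connected component of the complement of the union. -/
def IsOuterplanar {n : ℕ} (L : Fin n → Set Plane) : Prop :=
  ∀ i j, i ≠ j → ∀ p ∈ L i ∩ L j,
    ∃ x ∈ (⋃ k, L k)ᶜ,
      ¬ Bornology.IsBounded (connectedComponentIn (⋃ k, L k)ᶜ x) ∧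
      p ∈ closure (connectedComponentIn (⋃ k, L k)ᶜ x)

/-- A circle in the plane. -/
def IsCircle (S : Set Plane) : Prop :=
  ∃ (c : Plane) (r : ℝ), 0 < r ∧ S = Metric.sphere c r

/-!
The grid points `(i + 1, a * (i + 1) + b)` on the lines `y = a * x + b` form Elekes' configuration:
for suitable ranges it has `m ^ 4` incidences between `m ^ 3` lines and `2 * m ^ 3` points. Every
assignment of signs to the incidences is realized by a simple pseudoline arrangement: wiggle each
line to pass below or above each of its grid points as prescribed, bend the lines on the left so
that parallel ones cross, and shift them to avoid triple points.

If all these arrangements were realizable by circular arcs, then, since the homeomorphism maps the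
two sides of a pseudoline to the two sides of its circle, the signs of `m ^ 4` cubic polynomials in
the `8 * m ^ 3` coordinates of points and circles would form all `2 ^ (m ^ 4)` patterns. Warren-type
bounds only allow `m ^ O(m ^ 3)` of them.

For the bound, let `p` be the product of the polynomials. Different patterns live on disjoint open
sets, bounded without loss of generality, on whose boundaries `p` vanishes; hence `∇ p` takes every
small value on each of them. So a polynomial taking distinct values on these sets satisfies no
relation over `ℝ[∇ p]` of degree less than their number, whereas counting dimensions produces a
relation of degree bounded in terms of the degree of `p` and the number of variables.
-/

section Polynomials

open MvPolynomial

lemma totalDegree_pderiv_le {σ R : Type*} [CommSemiring R] (i : σ) (p : MvPolynomial σ R) :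
    (pderiv i p).totalDegree ≤ p.totalDegree := by
  classical
  refine Finset.sup_le fun m hm => ?_
  have hmem : m + Finsupp.single i 1 ∈ p.support := by
    rw [mem_support_iff, coeff_pderiv] at hm
    exact mem_support_iff.mpr (left_ne_zero_of_mul hm)
  have hdeg := le_totalDegree hmem
  rw [Finsupp.sum_add_index' (by simp) (by simp)] at hdeg
  exact (Nat.le_add_right _ _).trans hdeg

lemma totalDegree_aeval_le {σ τ R : Type*} [CommSemiring R] {g : σ → MvPolynomial τ R} {d : ℕ}
    (hg : ∀ i, (g i).totalDegree ≤ d) (p : MvPolynomial σ R) :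
    (aeval g p).totalDegree ≤ p.totalDegree * d := by
  rw [aeval_def, eval₂_eq]
  refine totalDegree_finsetSum_le fun m hm => ?_
  calc (algebraMap R _ (p.coeff m) * ∏ i ∈ m.support, g i ^ m i).totalDegree
      ≤ 0 + ∑ i ∈ m.support, m i * d := by
        refine (totalDegree_mul _ _).trans (add_le_add (totalDegree_C _).le ?_)
        exact (totalDegree_finsetProd _ _).trans <| Finset.sum_le_sum fun i _ =>
          (totalDegree_pow _ _).trans (Nat.mul_le_mul_left _ (hg i))
    _ = (m.sum fun _ e => e) * d := by rw [zero_add, Finsupp.sum, Finset.sum_mul]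
    _ ≤ p.totalDegree * d := Nat.mul_le_mul_right _ (le_totalDegree hm)

lemma totalDegree_le_of_mem_restrictDegree {σ R : Type*} [Fintype σ] [CommSemiring R] {n : ℕ}
    {p : MvPolynomial σ R} (hp : p ∈ restrictDegree σ R n) :
    p.totalDegree ≤ Fintype.card σ * n := by
  refine Finset.sup_le fun m hm => ?_
  rw [Finsupp.sum_fintype _ _ fun _ => rfl, ← smul_eq_mul, Fintype.card]
  exact Finset.sum_le_card_nsmul _ _ _ fun i _ => (mem_restrictDegree _ _ _).mp hp m hm i

lemma mem_restrictDegree_of_totalDegree_le {σ R : Type*} [CommSemiring R] {n : ℕ}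
    {p : MvPolynomial σ R} (hp : p.totalDegree ≤ n) : p ∈ restrictDegree σ R n := by
  classical
  refine (mem_restrictDegree_iff_sup _ p n).mpr fun i => ?_
  rw [← degreeOf_def]
  exact (degreeOf_le_totalDegree p i).trans hp

lemma finrank_restrictDegree (σ R : Type*) [Fintype σ] [CommRing R] [Nontrivial R] (n : ℕ) :
    Module.finrank R (restrictDegree σ R n) = (n + 1) ^ Fintype.card σ := by
  classical
  let e : {m : σ →₀ ℕ | ∀ i, m i ≤ n} ≃ (σ → Fin (n + 1)) :=
    (Finsupp.equivFunOnFinite.subtypeEquiv fun _ => Iff.rfl).trans <|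
      (Equiv.subtypePiEquivPi (p := fun _ k => k ≤ n)).trans <|
        Equiv.piCongrRight fun _ =>
          (Equiv.subtypeEquivRight fun _ => Nat.lt_succ_iff.symm).trans Fin.equivSubtype.symm
  refine (Module.finrank_eq_card_basis
    ((basisRestrictSupport R {m : σ →₀ ℕ | ∀ i, m i ≤ n}).reindex e)).trans ?_
  simp only [Fintype.card_fun, Fintype.card_fin]

/- Count dimensions: with `R s` of degree at most `H := max deg (h s)` in each variable there are
`|S| (H + 1) ^ |σ|` free coefficients, while the relation takes values in the polynomials of degree
at most `H + |σ| H d`, a space of dimension at most `(|σ| d + 1) ^ |σ| * (H + 1) ^ |σ|`. -/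
lemma exists_linear_relation_over_aeval {σ S K : Type*} [Fintype σ] [Fintype S] [Field K]
    (h : S → MvPolynomial σ K) {g : σ → MvPolynomial σ K} {d : ℕ}
    (hg : ∀ i, (g i).totalDegree ≤ d)
    (hS : (Fintype.card σ * d + 1) ^ Fintype.card σ < Fintype.card S) :
    ∃ R : S → MvPolynomial σ K, R ≠ 0 ∧ ∑ s, h s * aeval g (R s) = 0 := by
  set k := Fintype.card σ
  set H := Finset.univ.sup fun s => (h s).totalDegree
  let Φ : (S → MvPolynomial σ K) →ₗ[K] MvPolynomial σ K :=
    ∑ s, LinearMap.mulLeft K (h s) ∘ₗ (aeval g).toLinearMap ∘ₗ LinearMap.proj s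
  have Φ_apply (R : S → MvPolynomial σ K) : Φ R = ∑ s, h s * aeval g (R s) := by simp [Φ]
  let coeffs : (S → restrictDegree σ K H) →ₗ[K] (S → MvPolynomial σ K) :=
    (restrictDegree σ K H).subtype.compLeft S
  have hdeg (R : S → restrictDegree σ K H) :
      Φ (coeffs R) ∈ restrictDegree σ K (H + k * H * d) := by
    refine mem_restrictDegree_of_totalDegree_le ?_
    rw [Φ_apply]
    refine totalDegree_finsetSum_le fun s _ => (totalDegree_mul _ _).trans (add_le_add ?_ ?_)
    · exact Finset.le_sup (f := fun s => (h s).totalDegree) (Finset.mem_univ s)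
    · exact (totalDegree_aeval_le hg _).trans
        (Nat.mul_le_mul_right _ (totalDegree_le_of_mem_restrictDegree (R s).2))
  have hker : LinearMap.ker ((Φ ∘ₗ coeffs).codRestrict _ hdeg) ≠ ⊥ := by
    apply LinearMap.ker_ne_bot_of_finrank_lt
    rw [Module.finrank_pi_fintype]
    simp only [finrank_restrictDegree, Finset.sum_const, Finset.card_univ, smul_eq_mul]
    calc (H + k * H * d + 1) ^ k ≤ ((k * d + 1) * (H + 1)) ^ k :=
          Nat.pow_le_pow_left (by nlinarith [Nat.zero_le (k * d)]) _
      _ = (k * d + 1) ^ k * (H + 1) ^ k := mul_pow _ _ _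
      _ < Fintype.card S * (H + 1) ^ k := Nat.mul_lt_mul_of_pos_right hS (by positivity)
  obtain ⟨R, hR, hR0⟩ := Submodule.exists_mem_ne_zero_of_ne_bot hker
  refine ⟨coeffs R, fun h0 => hR0 ?_, ?_⟩
  · exact funext fun s => Subtype.ext (congrFun h0 s)
  · rw [← Φ_apply]
    exact congrArg Subtype.val (LinearMap.mem_ker.mp hR)

lemma hasFDerivAt_eval {V : Type*} [Fintype V] (p : MvPolynomial V ℝ) (x : V → ℝ) :
    HasFDerivAt (fun z : V → ℝ => eval z p)
      (∑ v, eval x (pderiv v p) • ContinuousLinearMap.proj (R := ℝ) (φ := fun _ : V => ℝ) v) x := by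
  classical
  induction p using MvPolynomial.induction_on with
  | C a => simpa using hasFDerivAt_const a x
  | add p q hp hq =>
    simpa only [map_add, add_smul, Finset.sum_add_distrib] using hp.fun_add hq
  | mul_X p w hp =>
    simp only [map_mul, eval_X]
    refine (hp.fun_mul (hasFDerivAt_apply w x)).congr_fderiv (Eq.symm ?_)
    simp only [pderiv_mul, pderiv_X, map_add, map_mul, eval_X, add_smul, Finset.sum_add_distrib,
      Finset.smul_sum, smul_smul]
    rw [add_comm]
    congr 1
    · rw [Finset.sum_eq_single w (fun v _ hv => by simp [hv]) (by simp)]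
      simp
    · exact Finset.sum_congr rfl fun v _ => by rw [mul_comm]

lemma exists_eval_near_continuousMap {V X : Type*} [TopologicalSpace X] [CompactSpace X]
    {ι : X → V → ℝ} (hι : Continuous ι) (hinj : Function.Injective ι) (f : C(X, ℝ)) {ε : ℝ}
    (hε : 0 < ε) : ∃ p : MvPolynomial V ℝ, ∀ x, |eval (ι x) p - f x| < ε := by
  let φ : MvPolynomial V ℝ →ₐ[ℝ] C(X, ℝ) :=
    aeval fun v => ⟨fun x => ι x v, (continuous_apply v).comp hι⟩
  have φ_apply (p : MvPolynomial V ℝ) (x : X) : φ p x = eval (ι x) p := by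
    induction p using MvPolynomial.induction_on with
    | C a => simp [φ, Algebra.algebraMap_eq_smul_one]
    | add p q hp hq => simp [hp, hq]
    | mul_X p v hp => rw [map_mul, ContinuousMap.mul_apply, hp]; simp [φ]
  have hsep : φ.range.SeparatesPoints := by
    intro x y hxy
    obtain ⟨v, hv⟩ := Function.ne_iff.mp (hinj.ne hxy)
    exact ⟨_, ⟨φ (MvPolynomial.X v), ⟨_, rfl⟩, rfl⟩, by simpa only [φ_apply, eval_X] using hv⟩
  obtain ⟨⟨-, p, rfl⟩, hp⟩ :=
    ContinuousMap.exists_mem_subalgebra_near_continuousMap_of_separatesPoints φ.range hsep f ε hε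
  refine ⟨p, fun x => ?_⟩
  rw [← φ_apply, ← Real.norm_eq_abs]
  exact (ContinuousMap.norm_lt_iff _ hε).mp hp x

lemma exists_eval_ne_eval_of_isCompact {V S : Type*} [Finite S] {K : S → Set (V → ℝ)}
    (hK : ∀ s, IsCompact (K s)) (hdisj : Pairwise (Function.onFun Disjoint K)) :
    ∃ p : MvPolynomial V ℝ, ∀ s t, s ≠ t → ∀ x ∈ K s, ∀ y ∈ K t, eval x p ≠ eval y p := by
  have (s : S) : CompactSpace (K s) := isCompact_iff_compactSpace.mp (hK s)
  let ι : (Σ s, K s) → V → ℝ := fun q => q.2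
  have hinj : Function.Injective ι := by
    rintro ⟨s, x, hx⟩ ⟨t, y, hy⟩ hxy
    obtain rfl : x = y := hxy
    obtain rfl : s = t := by
      by_contra hst
      exact Set.disjoint_left.mp (hdisj hst) hx hy
    rfl
  obtain ⟨n, ⟨e⟩⟩ := Finite.exists_equiv_fin S
  let index : C(Σ s, K s, ℝ) :=
    ⟨fun q => ((e q.1 : ℕ) : ℝ), continuous_sigma fun s =>
      (continuous_const : Continuous fun _ : K s => ((e s : ℕ) : ℝ))⟩
  obtain ⟨p, hp⟩ := exists_eval_near_continuousMap
    (continuous_sigma fun _ => continuous_subtype_val : Continuous ι) hinj index one_half_pos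
  refine ⟨p, fun s t hst x hx y hy hxy => hst (e.injective (Fin.ext ?_))⟩
  have hs : |eval x p - (e s : ℕ)| < 1 / 2 := hp ⟨s, x, hx⟩
  have ht : |eval y p - (e t : ℕ)| < 1 / 2 := hp ⟨t, y, hy⟩
  rw [hxy] at hs
  have hlt : |((e s : ℕ) : ℝ) - (e t : ℕ)| < 1 := by
    rw [abs_lt] at hs ht ⊢
    constructor <;> linarith
  have hlt' : |((e s : ℕ) : ℤ) - (e t : ℕ)| < 1 := by exact_mod_cast hlt
  exact_mod_cast sub_eq_zero.mp (Int.abs_lt_one_iff.mp hlt')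

end Polynomials

section SignVectors

open MvPolynomial Filter Topology

lemma exists_isCompact_eventually_fderiv_eq_of_pos {E : Type*} [NormedAddCommGroup E]
    [NormedSpace ℝ E] {U : Set E} (hU : IsOpen U) (hUc : IsCompact (closure U)) {f : E → ℝ}
    (hf : Differentiable ℝ f) (hfr : ∀ x ∈ frontier U, f x = 0) {w : E} (hw : w ∈ U)
    (hpos : 0 < f w) :
    ∃ K ⊆ U, IsCompact K ∧ ∀ᶠ φ : E →L[ℝ] ℝ in 𝓝 0, ∃ x ∈ K, fderiv ℝ f x = φ := by
  have hKU : closure U ∩ {x | f w / 2 ≤ f x} ⊆ U := by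
    rintro x ⟨hx, hfx : f w / 2 ≤ f x⟩
    by_contra hxU
    have : f x = 0 := hfr x ⟨hx, by rwa [hU.interior_eq]⟩
    linarith
  refine ⟨_, hKU, hUc.inter_right (isClosed_le continuous_const hf.continuous), ?_⟩
  obtain ⟨B, hB⟩ := hUc.isBounded.exists_norm_le
  have hsmall : ∀ᶠ φ : E →L[ℝ] ℝ in 𝓝 0, ‖φ‖ * B < f w / 4 :=
    ((continuous_norm.mul continuous_const).tendsto' 0 0 (by simp)).eventually_lt_const
      (by positivity)
  filter_upwards [hsmall] with φ hφ
  have hφ_le (x : E) (hx : x ∈ closure U) : |φ x| < f w / 4 :=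
    ((φ.le_opNorm x).trans (mul_le_mul_of_nonneg_left (hB x hx) (norm_nonneg φ))).trans_lt hφ
  obtain ⟨x, hx, hmax⟩ := hUc.exists_isMaxOn ⟨w, subset_closure hw⟩
    (hf.continuous.sub φ.continuous).continuousOn
  have hfx : f w / 2 ≤ f x := by
    have hwx : f w - φ w ≤ f x - φ x := hmax (subset_closure hw)
    have := abs_lt.mp (hφ_le w (subset_closure hw))
    have := abs_lt.mp (hφ_le x hx)
    linarith
  have hloc : IsLocalMax (fun y => f y - φ y) x :=
    (hmax.on_subset subset_closure).isLocalMax (hU.mem_nhds (hKU ⟨hx, hfx⟩))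
  refine ⟨x, ⟨hx, hfx⟩, sub_eq_zero.mp ?_⟩
  rw [← hloc.fderiv_eq_zero, fderiv_fun_sub (hf x) φ.differentiableAt, φ.fderiv]

lemma exists_isCompact_eventually_fderiv_eq {E : Type*} [NormedAddCommGroup E] [NormedSpace ℝ E]
    {U : Set E} (hU : IsOpen U) (hUc : IsCompact (closure U)) {f : E → ℝ}
    (hf : Differentiable ℝ f) (hfr : ∀ x ∈ frontier U, f x = 0) (hne : ∃ w ∈ U, f w ≠ 0) :
    ∃ K ⊆ U, IsCompact K ∧ ∀ᶠ φ : E →L[ℝ] ℝ in 𝓝 0, ∃ x ∈ K, fderiv ℝ f x = φ := by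
  obtain ⟨w, hw, hfw⟩ := hne
  rcases hfw.lt_or_gt with hneg | hpos
  · obtain ⟨K, hKU, hK, hKφ⟩ := exists_isCompact_eventually_fderiv_eq_of_pos hU hUc hf.neg
      (fun x hx => by simp [hfr x hx]) hw (by simpa using hneg)
    have hneg0 : Tendsto (fun φ : E →L[ℝ] ℝ => -φ) (𝓝 0) (𝓝 0) :=
      continuous_neg.tendsto' 0 0 neg_zero
    refine ⟨K, hKU, hK, (hneg0.eventually hKφ).mono ?_⟩
    rintro φ ⟨x, hx, hφ⟩
    exact ⟨x, hx, neg_injective (by rw [← hφ, fderiv_neg])⟩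
  · exact exists_isCompact_eventually_fderiv_eq_of_pos hU hUc hf hfr hw hpos

lemma exists_mem_eval_ne_zero {V : Type*} [Finite V] {p : MvPolynomial V ℝ} (hp : p ≠ 0)
    {x : V → ℝ} {s : Set (V → ℝ)} (hs : s ∈ 𝓝 x) : ∃ y ∈ s, eval y p ≠ 0 := by
  rw [nhds_pi, Filter.mem_pi'] at hs
  obtain ⟨I, t, ht, hts⟩ := hs
  by_contra! h
  refine hp (funext_set t (fun v => infinite_of_mem_nhds _ (ht v)) fun y hy => ?_)
  rw [h y (hts fun v _ => hy v (mem_univ v)), map_zero]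

lemma eventually_exists_eval_pderiv_eq {V : Type*} [Finite V] {p : MvPolynomial V ℝ}
    {K : Set (V → ℝ)}
    (hK : ∀ᶠ φ : (V → ℝ) →L[ℝ] ℝ in 𝓝 0, ∃ x ∈ K, fderiv ℝ (fun z => eval z p) x = φ) :
    ∀ᶠ y : V → ℝ in 𝓝 0, ∃ x ∈ K, ∀ v, eval x (pderiv v p) = y v := by
  classical
  have := Fintype.ofFinite V
  let grad (y : V → ℝ) : (V → ℝ) →L[ℝ] ℝ :=
    ∑ v, y v • ContinuousLinearMap.proj (R := ℝ) (φ := fun _ : V => ℝ) v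
  have grad_single (y : V → ℝ) (v : V) : grad y (Pi.single v 1) = y v := by
    simp [grad, Pi.single_apply]
  have hgrad : Tendsto grad (𝓝 0) (𝓝 0) :=
    Continuous.tendsto' (by fun_prop) 0 0 (by simp [grad])
  filter_upwards [hgrad.eventually hK] with y ⟨x, hx, hxy⟩
  refine ⟨x, hx, fun v => ?_⟩
  rw [(hasFDerivAt_eval p x).fderiv] at hxy
  exact (grad_single _ v).symm.trans ((DFunLike.congr_fun hxy _).trans (grad_single y v))

/- Every small `y` is the value of the gradient of `p` at points `x s ∈ U s`, which a polynomial `h`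
tells apart. A relation `∑ j, h ^ j * R j (∇ p) = 0` then says that the Vandermonde matrix of the
numbers `h (x s)` kills the vector `R j y`. -/
lemma card_le_of_eval_eq_zero_on_frontier {V S : Type*} [Fintype V] [Fintype S]
    {p : MvPolynomial V ℝ} {U : S → Set (V → ℝ)} (hU : ∀ s, IsOpen (U s))
    (hbdd : ∀ s, Bornology.IsBounded (U s)) (hdisj : Pairwise (Function.onFun Disjoint U))
    (hfr : ∀ s, ∀ x ∈ frontier (U s), eval x p = 0) (hne : ∀ s, ∃ x ∈ U s, eval x p ≠ 0) :
    Fintype.card S ≤ (Fintype.card V * p.totalDegree + 1) ^ Fintype.card V := by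
  by_contra! hcard
  have hdiff : Differentiable ℝ fun x : V → ℝ => eval x p :=
    fun x => (hasFDerivAt_eval p x).differentiableAt
  choose K hKU hK hgrad using fun s =>
    exists_isCompact_eventually_fderiv_eq (hU s) (hbdd s).isCompact_closure hdiff (hfr s) (hne s)
  obtain ⟨h, hsep⟩ := exists_eval_ne_eval_of_isCompact hK
    fun s t hst => (hdisj hst).mono (hKU s) (hKU t)
  obtain ⟨R, hR0, hR⟩ := exists_linear_relation_over_aeval
    (fun j : Fin (Fintype.card S) => h ^ (j : ℕ)) (fun v => totalDegree_pderiv_le v p)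
    (by rwa [Fintype.card_fin])
  obtain ⟨j, hj⟩ := Function.ne_iff.mp hR0
  obtain ⟨y, hy, hRy⟩ := exists_mem_eval_ne_zero hj <|
    eventually_all.mpr fun s => eventually_exists_eval_pderiv_eq (hgrad s)
  choose x hxK hxy using hy
  let e := Fintype.equivFin S
  have hinj : Function.Injective fun i => eval (x (e.symm i)) h := by
    intro i i' hii'
    by_contra hne
    exact hsep _ _ (e.symm.injective.ne hne) _ (hxK _) _ (hxK _) hii'
  have hsum (i : Fin (Fintype.card S)) :
      ∑ j : Fin (Fintype.card S), eval (x (e.symm i)) h ^ (j : ℕ) * eval y (R j) = 0 := by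
    have hid : (eval (x (e.symm i))).comp (algebraMap ℝ (MvPolynomial V ℝ)) = RingHom.id ℝ :=
      RingHom.ext fun a => eval_C a
    have hRx := congrArg (eval (x (e.symm i))) hR
    simp only [map_sum, map_mul, map_pow, map_zero, map_aeval, hxy, hid] at hRx
    exact hRx
  exact hRy (congrFun (Matrix.eq_zero_of_forall_index_sum_pow_mul_eq_zero hinj hsum) j)

variable {V I : Type*}

/-- The sign vector of the family `F` at the point `x`. The sets on which it takes a given nowhere
vanishing value are unions of cells of the arrangement of the zero sets of the `F i`. -/
noncomputable def signVector (F : I → MvPolynomial V ℝ) (x : V → ℝ) : I → SignType :=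
  fun i => SignType.sign (eval x (F i))

lemma signVector_apply_ne_zero {F : I → MvPolynomial V ℝ} {x : V → ℝ} {i : I} :
    signVector F x i ≠ 0 ↔ eval x (F i) ≠ 0 :=
  sign_ne_zero

lemma eventually_signVector_eq [Finite I] {F : I → MvPolynomial V ℝ} {x : V → ℝ}
    (hx : ∀ i, eval x (F i) ≠ 0) : ∀ᶠ y in 𝓝 x, signVector F y = signVector F x := by
  refine (eventually_all.mpr fun i => ?_).mono fun y hy => funext hy
  have hcont : ContinuousAt (fun y => SignType.sign (eval y (F i))) x :=
    (continuousAt_sign_of_ne_zero (hx i)).comp (x := x)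
      (MvPolynomial.continuous_eval (F i)).continuousAt
  exact tendsto_pure.mp (nhds_discrete SignType ▸ hcont)

lemma isOpen_signVector_eq [Finite I] {F : I → MvPolynomial V ℝ} {σ : I → SignType}
    (hσ : ∀ i, σ i ≠ 0) : IsOpen {x | signVector F x = σ} := by
  refine isOpen_iff_mem_nhds.mpr fun x hx => ?_
  have hx0 (i : I) : eval x (F i) ≠ 0 :=
    signVector_apply_ne_zero.mp ((congrFun hx i).trans_ne (hσ i))
  exact (eventually_signVector_eq hx0).mono fun y hy => hy.trans hx

lemma exists_eval_eq_zero_of_mem_frontier [Finite I] {F : I → MvPolynomial V ℝ} {σ : I → SignType}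
    {x : V → ℝ} (hx : x ∈ frontier {x | signVector F x = σ}) : ∃ i, eval x (F i) = 0 := by
  by_contra! hx0
  have hconst := eventually_signVector_eq hx0
  obtain ⟨y, hyx, hyσ⟩ := mem_closure_iff_nhds.mp hx.1 _ hconst
  exact hx.2 (mem_interior_iff_mem_nhds.mpr (hconst.mono fun z hz => hz.trans (hyx.symm.trans hyσ)))

variable [Fintype V] [Fintype I] {S : Type*} [Fintype S]

lemma card_le_of_isBounded_of_injective_signVector {F : I → MvPolynomial V ℝ} {x : S → V → ℝ}
    (hx : ∀ s i, eval (x s) (F i) ≠ 0) (hinj : Function.Injective fun s => signVector F (x s))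
    (hbdd : ∀ s, Bornology.IsBounded {y | signVector F y = signVector F (x s)}) :
    Fintype.card S ≤ (Fintype.card V * ∑ i, (F i).totalDegree + 1) ^ Fintype.card V := by
  refine (card_le_of_eval_eq_zero_on_frontier (p := ∏ i, F i)
    (fun s => isOpen_signVector_eq fun i => sign_ne_zero.mpr (hx s i)) hbdd ?_ ?_ ?_).trans ?_
  · refine fun s t hst => Set.disjoint_left.mpr fun y hys hyt => hst (hinj ?_)
    exact hys.symm.trans hyt
  · intro s y hy
    obtain ⟨i, hi⟩ := exists_eval_eq_zero_of_mem_frontier hy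
    rw [map_prod]
    exact Finset.prod_eq_zero (Finset.mem_univ i) hi
  · refine fun s => ⟨x s, rfl, ?_⟩
    rw [map_prod]
    exact Finset.prod_ne_zero_iff.mpr fun i _ => hx s i
  · gcongr
    exact totalDegree_finsetProd _ _

/- A cell may be unbounded: adding the polynomial `C r - ∑ v, X v ^ 2` for large `r` cuts each cell
down to a bounded one. -/
theorem card_le_of_injective_signVector {F : I → MvPolynomial V ℝ} {x : S → V → ℝ}
    (hx : ∀ s i, eval (x s) (F i) ≠ 0) (hinj : Function.Injective fun s => signVector F (x s)) :
    Fintype.card S ≤ (Fintype.card V * (∑ i, (F i).totalDegree + 2) + 1) ^ Fintype.card V := by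
  obtain ⟨r, hr⟩ := Finite.exists_le fun s => ∑ v, x s v ^ 2
  let ball : MvPolynomial V ℝ := C (r + 1) - ∑ v, X v ^ 2
  have eval_ball (y : V → ℝ) : eval y ball = r + 1 - ∑ v, y v ^ 2 := by simp [ball]
  have hball (s : S) : 0 < eval (x s) ball := by linarith [hr s, eval_ball (x s)]
  have hdeg : ball.totalDegree ≤ 2 := by
    refine (totalDegree_sub _ _).trans (max_le ?_ (totalDegree_finsetSum_le fun v _ => ?_))
    · exact (totalDegree_C _).trans_le (Nat.zero_le 2)
    · exact (totalDegree_X_pow v 2).le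
  let G : Option I → MvPolynomial V ℝ := fun o => o.elim ball F
  refine (card_le_of_isBounded_of_injective_signVector (F := G) (x := x) ?_ ?_ ?_).trans ?_
  · rintro s (_ | i)
    exacts [(hball s).ne', hx s i]
  · exact fun s t hst => hinj (funext fun i => congrFun hst (some i))
  · refine fun s => isBounded_iff_forall_norm_le.mpr ⟨√(r + 1), fun y hy => ?_⟩
    have hy0 : 0 < eval y ball :=
      sign_eq_one_iff.mp ((congrFun hy none).trans (sign_pos (hball s)))
    refine (pi_norm_le_iff_of_nonneg (Real.sqrt_nonneg _)).mpr fun v => Real.abs_le_sqrt ?_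
    have := Finset.single_le_sum (fun v _ => sq_nonneg (y v)) (Finset.mem_univ v)
    linarith [eval_ball y]
  · have hsum : ∑ o, (G o).totalDegree ≤ ∑ i, (F i).totalDegree + 2 := by
      rw [Fintype.sum_option, add_comm]
      exact Nat.add_le_add_left hdeg _
    gcongr

lemma two_pow_card_le_of_forall_exists_signVector_eq {F : I → MvPolynomial V ℝ}
    (hF : ∀ σ : I → SignType, (∀ i, σ i ≠ 0) → ∃ x, signVector F x = σ) :
    2 ^ Fintype.card I ≤
      (Fintype.card V * (∑ i, (F i).totalDegree + 2) + 1) ^ Fintype.card V := by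
  classical
  choose x hx using fun σ : {σ : I → SignType // ∀ i, σ i ≠ 0} => hF σ σ.2
  have hcard : Fintype.card {σ : I → SignType // ∀ i, σ i ≠ 0} = 2 ^ Fintype.card I := by
    rw [Fintype.card_congr (Equiv.subtypePiEquivPi (p := fun (_ : I) (s : SignType) => s ≠ 0))]
    rw [Fintype.card_pi, Finset.prod_const, Finset.card_univ]
    rfl
  rw [← hcard]
  refine card_le_of_injective_signVector (x := x) (fun σ i => ?_) fun σ τ hστ => ?_
  · exact signVector_apply_ne_zero.mp ((congrFun (hx σ) i).trans_ne (σ.2 i))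
  · exact Subtype.ext ((hx σ).symm.trans (hστ.trans (hx τ)))

end SignVectors

section Graphs

variable {f g : ℝ → ℝ} {x : ℝ} {p : Plane}

/-- The graph of a real function, as a subset of the plane. -/
def graphSet (f : ℝ → ℝ) : Set Plane := {p | p 1 = f (p 0)}

/-- The open region strictly above the graph of `f`. -/
def aboveSet (f : ℝ → ℝ) : Set Plane := {p | f (p 0) < p 1}

/-- The open region strictly below the graph of `f`. -/
def belowSet (f : ℝ → ℝ) : Set Plane := {p | p 1 < f (p 0)}

lemma mk_mem_graphSet (f : ℝ → ℝ) (x : ℝ) : !₂[x, f x] ∈ graphSet f := rfl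

/-- The homeomorphism of the plane that maps the graph of `f` to the horizontal axis by translating
each vertical line. -/
def straighten (hf : Continuous f) : Plane ≃ₜ Plane where
  toFun p := !₂[p 0, p 1 - f (p 0)]
  invFun p := !₂[p 0, p 1 + f (p 0)]
  left_inv p := by ext i; fin_cases i <;> simp
  right_inv p := by ext i; fin_cases i <;> simp
  continuous_toFun := by
    refine (PiLp.continuous_toLp 2 _).comp (continuous_pi fun i => ?_)
    fin_cases i <;> dsimp <;> fun_prop
  continuous_invFun := by
    refine (PiLp.continuous_toLp 2 _).comp (continuous_pi fun i => ?_)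
    fin_cases i <;> dsimp <;> fun_prop

lemma isLine_axis : IsLine {p | p 1 = 0} := by
  refine ⟨0, !₂[1, 0], fun h => one_ne_zero (congrArg (fun p : Plane => p 0) h), ?_⟩
  ext p
  constructor
  · intro (hp : p 1 = 0)
    refine ⟨p 0, ?_⟩
    ext i
    fin_cases i <;> simp [hp]
  · rintro ⟨t, rfl⟩
    simp

lemma isPseudoline_graphSet (hf : Continuous f) : IsPseudoline (graphSet f) := by
  refine ⟨(straighten hf).symm, _, isLine_axis, ?_⟩
  rw [Homeomorph.image_symm]
  ext p
  exact sub_eq_zero.symm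

lemma isLinearMap_apply_one : IsLinearMap ℝ fun p : Plane => p 1 :=
  ⟨fun _ _ => rfl, fun _ _ => rfl⟩

lemma isPreconnected_aboveSet (hf : Continuous f) : IsPreconnected (aboveSet f) := by
  have h : aboveSet f = straighten hf ⁻¹' {p | 0 < p 1} := by
    ext p
    exact (sub_pos (a := p 1)).symm
  rw [h, Homeomorph.isPreconnected_preimage]
  exact (convex_halfSpace_gt isLinearMap_apply_one 0).isPreconnected

lemma isPreconnected_belowSet (hf : Continuous f) : IsPreconnected (belowSet f) := by
  have h : belowSet f = straighten hf ⁻¹' {p | p 1 < 0} := by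
    ext p
    exact (sub_neg (a := p 1)).symm
  rw [h, Homeomorph.isPreconnected_preimage]
  exact (convex_halfSpace_lt isLinearMap_apply_one 0).isPreconnected

lemma graphSet_inter_connectedComponentIn_nonempty (hg : Continuous g) (hlt : ∃ x, f x < g x)
    (hgt : ∃ x, g x < f x) (hp : p ∈ (graphSet g)ᶜ) :
    (graphSet f ∩ connectedComponentIn (graphSet g)ᶜ p).Nonempty := by
  rcases lt_or_gt_of_ne hp with hbelow | habove
  · obtain ⟨x, hx⟩ := hlt
    have hsub : belowSet g ⊆ (graphSet g)ᶜ := fun q (hq : q 1 < g (q 0)) => hq.ne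
    exact ⟨!₂[x, f x], mk_mem_graphSet f x,
      (isPreconnected_belowSet hg).subset_connectedComponentIn hbelow hsub hx⟩
  · obtain ⟨x, hx⟩ := hgt
    have hsub : aboveSet g ⊆ (graphSet g)ᶜ := fun q (hq : g (q 0) < q 1) => hq.ne'
    exact ⟨!₂[x, f x], mk_mem_graphSet f x,
      (isPreconnected_aboveSet hg).subset_connectedComponentIn habove hsub hx⟩

/-- `f` and `g` agree at exactly one point, where `f` passes from below `g` to above `g`. -/
def CrossUp (f g : ℝ → ℝ) : Prop :=
  ∃ x₀, f x₀ = g x₀ ∧ (∀ x < x₀, f x < g x) ∧ ∀ x > x₀, g x < f x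

/-- `f` and `g` agree at exactly one point, where they change sides. -/
def CrossOnce (f g : ℝ → ℝ) : Prop := CrossUp f g ∨ CrossUp g f

lemma CrossUp.eq_of_apply_eq {y : ℝ} (h : CrossUp f g) (hx : f x = g x) (hy : f y = g y) :
    x = y := by
  obtain ⟨x₀, -, hlt, hgt⟩ := h
  have eq_x₀ {z : ℝ} (hz : f z = g z) : z = x₀ :=
    le_antisymm (not_lt.mp fun h => (hgt z h).ne' hz) (not_lt.mp fun h => (hlt z h).ne hz)
  rw [eq_x₀ hx, eq_x₀ hy]

namespace CrossOnce

lemma symm (h : CrossOnce f g) : CrossOnce g f := Or.symm h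

lemma exists_apply_eq (h : CrossOnce f g) : ∃ x, f x = g x := by
  rcases h with ⟨x, hx, -⟩ | ⟨x, hx, -⟩
  exacts [⟨x, hx⟩, ⟨x, hx.symm⟩]

lemma exists_lt (h : CrossOnce f g) : ∃ x, f x < g x := by
  rcases h with ⟨x, -, hlt, -⟩ | ⟨x, -, -, hgt⟩
  exacts [⟨x - 1, hlt _ (sub_one_lt x)⟩, ⟨x + 1, hgt _ (lt_add_one x)⟩]

lemma eq_of_apply_eq {y : ℝ} (h : CrossOnce f g) (hx : f x = g x) (hy : f y = g y) : x = y := by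
  rcases h with h | h
  exacts [h.eq_of_apply_eq hx hy, h.eq_of_apply_eq hx.symm hy.symm]

lemma graphSet_ne (h : CrossOnce f g) : graphSet f ≠ graphSet g := by
  obtain ⟨x, hx⟩ := h.exists_lt
  exact fun heq => hx.ne (heq ▸ mk_mem_graphSet f x : !₂[x, f x] ∈ graphSet g)

lemma subsingleton_graphSet_inter (h : CrossOnce f g) :
    (graphSet f ∩ graphSet g).Subsingleton := by
  rintro p ⟨hpf : p 1 = f (p 0), hpg : p 1 = g (p 0)⟩ q ⟨hqf : q 1 = f (q 0), hqg : q 1 = g (q 0)⟩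
  have h0 : p 0 = q 0 := h.eq_of_apply_eq (hpf.symm.trans hpg) (hqf.symm.trans hqg)
  ext i
  fin_cases i
  exacts [h0, hpf.trans ((congrArg f h0).trans hqf.symm)]

end CrossOnce

theorem isArrangement_graphSet {n : ℕ} {f : Fin n → ℝ → ℝ} (hf : ∀ i, Continuous (f i))
    (hcross : Pairwise fun i j => CrossOnce (f i) (f j)) :
    IsArrangement fun i => graphSet (f i) := by
  refine ⟨⟨?_, fun i => isPseudoline_graphSet (hf i),
    fun i j hij => (hcross hij).subsingleton_graphSet_inter, fun i j hij p hp => ⟨hp, ?_, ?_⟩⟩, ?_⟩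
  · exact fun i j hij => of_not_not fun hne => (hcross hne).graphSet_ne hij
  · exact fun q => graphSet_inter_connectedComponentIn_nonempty (hf j)
      (hcross hij).exists_lt (hcross hij).symm.exists_lt
  · exact fun q => graphSet_inter_connectedComponentIn_nonempty (hf i)
      (hcross hij).symm.exists_lt (hcross hij).exists_lt
  · intro i j hij
    obtain ⟨x, hx⟩ := (hcross hij).exists_apply_eq
    exact ⟨!₂[x, f i x], mk_mem_graphSet _ x, hx⟩

lemma isSimple_graphSet {n : ℕ} {f : Fin n → ℝ → ℝ}
    (h : ∀ i j k, i ≠ j → i ≠ k → j ≠ k → ∀ x, f i x = f j x → f i x ≠ f k x) :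
    IsSimple fun i => graphSet (f i) := by
  intro p i j k (hi : p 1 = f i (p 0)) (hj : p 1 = f j (p 0)) (hk : p 1 = f k (p 0))
  by_contra! hne
  exact h i j k hne.1 hne.2.1 hne.2.2 (p 0) (hi.symm.trans hj) (hi.symm.trans hk)

end Graphs

section Circles

open Filter Topology

variable {k : Fin 4 → ℝ} {p : Plane}

/-- The equation of a generalized circle: the zero sets of `circEq k` with `0 < circDiscr k` are
the circles and the straight lines. -/
def circEq (k : Fin 4 → ℝ) (p : Plane) : ℝ :=
  k 0 * (p 0 ^ 2 + p 1 ^ 2) + k 1 * p 0 + k 2 * p 1 + k 3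

/-- The discriminant of `circEq k`, which is also the squared length of the gradient of `circEq k`
at each of its zeros. -/
def circDiscr (k : Fin 4 → ℝ) : ℝ := k 1 ^ 2 + k 2 ^ 2 - 4 * k 0 * k 3

lemma continuous_circEq (k : Fin 4 → ℝ) : Continuous (circEq k) := by
  unfold circEq
  fun_prop

lemma circEq_neg (k : Fin 4 → ℝ) (p : Plane) : circEq (-k) p = -circEq k p := by
  simp only [circEq, Pi.neg_apply]
  ring

lemma circDiscr_neg (k : Fin 4 → ℝ) : circDiscr (-k) = circDiscr k := by
  simp only [circDiscr, Pi.neg_apply]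
  ring

lemma IsCircle.exists_circEq {γ : Set Plane} (hγ : IsCircle γ) :
    ∃ k, 0 < circDiscr k ∧ γ = {p | circEq k p = 0} := by
  obtain ⟨c, r, hr, rfl⟩ := hγ
  refine ⟨![1, -2 * c 0, -2 * c 1, c 0 ^ 2 + c 1 ^ 2 - r ^ 2], ?_, ?_⟩
  · have : 0 < 4 * r ^ 2 := by positivity
    simp only [circDiscr, Matrix.cons_val]
    linarith
  · ext p
    rw [Metric.mem_sphere, EuclideanSpace.dist_eq, Real.sqrt_eq_iff_eq_sq (by positivity) hr.le,
      ← sub_eq_zero]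
    simp only [Fin.sum_univ_two, Real.dist_eq, sq_abs, mem_ofPred_eq, circEq, Matrix.cons_val]
    ring_nf

lemma IsLine.exists_circEq {γ : Set Plane} (hγ : IsLine γ) :
    ∃ k, 0 < circDiscr k ∧ γ = {p | circEq k p = 0} := by
  obtain ⟨a, u, hu, rfl⟩ := hγ
  have hu' : 0 < u 0 ^ 2 + u 1 ^ 2 := by
    rw [← Fin.sum_univ_two fun i => u i ^ 2, ← EuclideanSpace.real_norm_sq_eq]
    positivity
  refine ⟨![0, u 1, -u 0, a 1 * u 0 - a 0 * u 1], ?_, ?_⟩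
  · simp only [circDiscr, Matrix.cons_val]
    linarith
  · ext p
    simp only [mem_ofPred_eq, circEq, Matrix.cons_val]
    constructor
    · rintro ⟨t, rfl⟩
      simp only [PiLp.add_apply, PiLp.smul_apply, smul_eq_mul]
      ring
    · intro h
      refine ⟨((p 0 - a 0) * u 0 + (p 1 - a 1) * u 1) / (u 0 ^ 2 + u 1 ^ 2), ?_⟩
      ext i
      fin_cases i <;> simp <;> field_simp
      · linear_combination u 1 * h
      · linear_combination -u 0 * h

lemma circEq_add_smul_of_eq_zero (h : circEq k p = 0) (t : ℝ) :
    circEq k (p + t • !₂[2 * k 0 * p 0 + k 1, 2 * k 0 * p 1 + k 2]) =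
      t * (circDiscr k * (1 + t * k 0)) := by
  simp only [circEq, circDiscr, PiLp.add_apply, PiLp.smul_apply, smul_eq_mul,
    Matrix.cons_val] at h ⊢
  linear_combination (1 + 4 * t * k 0 + 4 * t ^ 2 * k 0 ^ 2) * h

lemma exists_circEq_pos_of_mem_nhds (hk : 0 < circDiscr k) (hp : circEq k p = 0) {U : Set Plane}
    (hU : U ∈ 𝓝 p) : ∃ q ∈ U, 0 < circEq k q := by
  have hline : Tendsto (fun t : ℝ => p + t • !₂[2 * k 0 * p 0 + k 1, 2 * k 0 * p 1 + k 2])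
      (𝓝[>] 0) (𝓝 p) :=
    (Continuous.tendsto' (by fun_prop) 0 p (by simp)).mono_left nhdsWithin_le_nhds
  have hfactor : ∀ᶠ t : ℝ in 𝓝[>] 0, 0 < circDiscr k * (1 + t * k 0) :=
    ((Continuous.tendsto' (by fun_prop) 0 (circDiscr k) (by simp)).eventually_const_lt
      hk).filter_mono nhdsWithin_le_nhds
  obtain ⟨t, htU, ht, ht0⟩ :=
    ((hline.eventually_mem hU).and (hfactor.and self_mem_nhdsWithin)).exists
  exact ⟨_, htU, circEq_add_smul_of_eq_zero hp t ▸ mul_pos ht0 ht⟩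

lemma exists_circEq_neg_of_mem_nhds (hk : 0 < circDiscr k) (hp : circEq k p = 0) {U : Set Plane}
    (hU : U ∈ 𝓝 p) : ∃ q ∈ U, circEq k q < 0 := by
  obtain ⟨q, hqU, hq⟩ := exists_circEq_pos_of_mem_nhds (k := -k) (by rwa [circDiscr_neg])
    (by rw [circEq_neg, hp, neg_zero]) hU
  exact ⟨q, hqU, neg_pos.mp (circEq_neg k q ▸ hq)⟩

lemma forall_pos_or_forall_neg_of_isPreconnected {X : Type*} [TopologicalSpace X] {s : Set X}
    (hs : IsPreconnected s) {F : X → ℝ} (hF : Continuous F) (h0 : ∀ x ∈ s, F x ≠ 0) :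
    (∀ x ∈ s, 0 < F x) ∨ ∀ x ∈ s, F x < 0 := by
  by_contra! h
  obtain ⟨⟨x, hx, hFx⟩, y, hy, hFy⟩ := h
  obtain ⟨z, hz, hFz⟩ := hs.intermediate_value hx hy hF.continuousOn ⟨hFx, hFy⟩
  exact h0 z hz hFz

lemma sign_eq_or_sign_eq_neg_of_zeros_eq_graphSet {f : ℝ → ℝ} (hf : Continuous f) {F : Plane → ℝ}
    (hF : Continuous F) (hzero : ∀ z, F z = 0 ↔ z ∈ graphSet f) (hpos : ∃ z, 0 < F z)
    (hneg : ∃ z, F z < 0) :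
    (∀ z, SignType.sign (F z) = SignType.sign (z 1 - f (z 0))) ∨
      ∀ z, SignType.sign (-F z) = SignType.sign (z 1 - f (z 0)) := by
  obtain ⟨⟨p, hp⟩, q, hq⟩ := And.intro hpos hneg
  have habove := forall_pos_or_forall_neg_of_isPreconnected (isPreconnected_aboveSet hf) hF
    fun z (hz : f (z 0) < z 1) h => hz.ne' ((hzero z).mp h)
  have hbelow := forall_pos_or_forall_neg_of_isPreconnected (isPreconnected_belowSet hf) hF
    fun z (hz : z 1 < f (z 0)) h => hz.ne ((hzero z).mp h)
  rcases habove with ha | ha <;> rcases hbelow with hb | hb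
  · rcases lt_trichotomy (q 1) (f (q 0)) with h | h | h
    exacts [absurd hq (hb q h).not_gt, absurd ((hzero q).mpr h) hq.ne, absurd hq (ha q h).not_gt]
  · refine Or.inl fun z => ?_
    rcases lt_trichotomy (z 1) (f (z 0)) with h | h | h
    · rw [sign_neg (hb z h), sign_neg (sub_neg.mpr h)]
    · rw [(hzero z).mpr h, sub_eq_zero.mpr h]
    · rw [sign_pos (ha z h), sign_pos (sub_pos.mpr h)]
  · refine Or.inr fun z => ?_
    rcases lt_trichotomy (z 1) (f (z 0)) with h | h | h
    · rw [sign_neg (neg_neg_iff_pos.mpr (hb z h)), sign_neg (sub_neg.mpr h)]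
    · rw [(hzero z).mpr h, sub_eq_zero.mpr h, neg_zero]
    · rw [sign_pos (neg_pos.mpr (ha z h)), sign_pos (sub_pos.mpr h)]
  · rcases lt_trichotomy (p 1) (f (p 0)) with h | h | h
    exacts [absurd hp (hb p h).not_gt, absurd ((hzero p).mpr h) hp.ne', absurd hp (ha p h).not_gt]

theorem exists_circEq_sign_eq {f : ℝ → ℝ} (hf : Continuous f) {γ U : Set Plane}
    (hγ : IsCircle γ ∨ IsLine γ) (hU : IsOpen U) (h : Plane ≃ₜ U)
    (himage : Subtype.val '' (h '' graphSet f) = γ ∩ U) :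
    ∃ k, ∀ z, SignType.sign (circEq k (h z)) = SignType.sign (z 1 - f (z 0)) := by
  obtain ⟨k, hk, rfl⟩ := hγ.elim IsCircle.exists_circEq IsLine.exists_circEq
  have hzero (z : Plane) : circEq k (h z) = 0 ↔ z ∈ graphSet f := by
    rw [← h.injective.mem_set_image, ← Subtype.val_injective.mem_set_image, himage]
    exact ⟨fun hz => ⟨hz, (h z).2⟩, And.left⟩
  have hcont : Continuous fun z => circEq k (h z) :=
    (continuous_circEq k).comp (continuous_subtype_val.comp h.continuous)
  have hp := (hzero _).mpr (mk_mem_graphSet f 0)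
  have hUp := hU.mem_nhds (h !₂[0, f 0]).2
  have hpos : ∃ z, 0 < circEq k (h z) := by
    obtain ⟨q, hqU, hq⟩ := exists_circEq_pos_of_mem_nhds hk hp hUp
    exact ⟨h.symm ⟨q, hqU⟩, by rwa [h.apply_symm_apply]⟩
  have hneg : ∃ z, circEq k (h z) < 0 := by
    obtain ⟨q, hqU, hq⟩ := exists_circEq_neg_of_mem_nhds hk hp hUp
    exact ⟨h.symm ⟨q, hqU⟩, by rwa [h.apply_symm_apply]⟩
  rcases sign_eq_or_sign_eq_neg_of_zeros_eq_graphSet hf hcont hzero hpos hneg with hs | hs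
  · exact ⟨k, hs⟩
  · exact ⟨-k, fun z => by rw [circEq_neg, hs]⟩

end Circles

section Grid

lemma crossUp_of_le_sub {f g : ℝ → ℝ} (hf : Continuous f) (hg : Continuous g) {c : ℝ} (hc : 0 < c)
    (h : ∀ x y, x ≤ y → c * (y - x) ≤ f y - g y - (f x - g x)) : CrossUp f g := by
  have hright : 0 ≤ f (|f 0 - g 0| / c) - g (|f 0 - g 0| / c) := by
    have := h 0 (|f 0 - g 0| / c) (by positivity)
    rw [sub_zero, mul_div_cancel₀ _ hc.ne'] at this
    linarith [neg_abs_le (f 0 - g 0)]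
  have hleft : f (-(|f 0 - g 0| / c)) - g (-(|f 0 - g 0| / c)) ≤ 0 := by
    have := h (-(|f 0 - g 0| / c)) 0 (neg_nonpos.mpr (by positivity))
    rw [zero_sub, neg_neg, mul_div_cancel₀ _ hc.ne'] at this
    linarith [le_abs_self (f 0 - g 0)]
  obtain ⟨x₀, hx₀ : f x₀ - g x₀ = 0⟩ :=
    mem_range_of_exists_le_of_exists_ge (hf.sub hg) ⟨_, hleft⟩ ⟨_, hright⟩
  refine ⟨x₀, sub_eq_zero.mp hx₀, fun x hx => ?_, fun x hx => ?_⟩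
  · linarith [h x x₀ hx.le, mul_pos hc (sub_pos.mpr hx)]
  · linarith [h x₀ x hx.le, mul_pos hc (sub_pos.mpr hx)]

lemma crossUp_of_affine_of_pos {f g : ℝ → ℝ} {c d : ℝ} (hc : 0 < c)
    (hleft : ∀ x ≤ 0, f x - g x = c * x + d) (hright : ∀ x, 0 ≤ x → g x < f x) : CrossUp f g := by
  have hd : 0 < d := by linarith [hleft 0 le_rfl, hright 0 le_rfl]
  have hx₀ : -d / c < 0 := div_neg_of_neg_of_pos (neg_neg_of_pos hd) hc
  have hroot : c * (-d / c) = -d := mul_div_cancel₀ _ hc.ne'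
  refine ⟨-d / c, ?_, fun x hx => ?_, fun x hx => ?_⟩
  · linarith [hleft _ hx₀.le]
  · linarith [hleft x (hx.trans hx₀).le, mul_lt_mul_of_pos_left hx hc]
  · rcases le_total x 0 with hx0 | hx0
    · linarith [hleft x hx0, mul_lt_mul_of_pos_left hx hc]
    · exact hright x hx0

/-- The line `x ↦ a * x + b`, perturbed by `u` and bent on the left half-plane so that lines with
the same slope meet there. -/
def bentLine (κ a b : ℝ) (u : ℝ → ℝ) (x : ℝ) : ℝ := a * x + b * (1 + κ * min x 0) + u x

/-- Perturbations too small to affect how bent lines with integral `a` and `b` cross. -/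
structure IsSmallWiggle (u : ℝ → ℝ) : Prop where
  abs_sub_le (x y : ℝ) : |u x - u y| ≤ 1 / 8 * |x - y|
  abs_le (x : ℝ) : |u x| ≤ 1 / 4
  eq_of_nonpos (x : ℝ) (hx : x ≤ 0) : u x = u 0

variable {κ a a' b b' : ℝ} {u u' : ℝ → ℝ}

lemma IsSmallWiggle.continuous (hu : IsSmallWiggle u) : Continuous u :=
  (LipschitzWith.of_dist_le' hu.abs_sub_le).continuous

lemma continuous_bentLine (hu : Continuous u) : Continuous (bentLine κ a b u) := by
  unfold bentLine
  fun_prop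

lemma crossUp_bentLine_of_slope_lt (hu : IsSmallWiggle u) (hu' : IsSmallWiggle u')
    (ha : a' + 1 ≤ a) (hb : |b - b'| * κ ≤ 1 / 4) (hκ : 0 ≤ κ) :
    CrossUp (bentLine κ a b u) (bentLine κ a' b' u') := by
  refine crossUp_of_le_sub (continuous_bentLine hu.continuous) (continuous_bentLine hu'.continuous)
    one_half_pos fun x y hxy => ?_
  have hslope : y - x ≤ (a - a') * (y - x) :=
    le_mul_of_one_le_left (sub_nonneg.mpr hxy) (by linarith)
  have hbend : |(b - b') * κ * (min y 0 - min x 0)| ≤ 1 / 4 * (y - x) := by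
    rw [abs_mul, abs_mul, abs_of_nonneg hκ]
    refine mul_le_mul hb ?_ (abs_nonneg _) (by norm_num)
    refine (abs_min_sub_min_le_max y 0 x 0).trans_eq ?_
    rw [sub_self, abs_zero, max_eq_left (abs_nonneg _), abs_of_nonneg (sub_nonneg.mpr hxy)]
  have hwiggle := hu.abs_sub_le y x
  have hwiggle' := hu'.abs_sub_le y x
  rw [abs_of_nonneg (sub_nonneg.mpr hxy)] at hwiggle hwiggle'
  have hdiff : bentLine κ a b u y - bentLine κ a' b' u' y -
      (bentLine κ a b u x - bentLine κ a' b' u' x) =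
      (a - a') * (y - x) + (b - b') * κ * (min y 0 - min x 0) + (u y - u x) - (u' y - u' x) := by
    unfold bentLine
    ring
  rw [hdiff]
  linarith [(abs_le.mp hbend).1, (abs_le.mp hwiggle).1, (abs_le.mp hwiggle').2]

lemma crossUp_bentLine_of_lt (hu : IsSmallWiggle u) (hu' : IsSmallWiggle u') (hb : b' + 1 ≤ b)
    (hκ : 0 < κ) : CrossUp (bentLine κ a b u) (bentLine κ a b' u') := by
  refine crossUp_of_affine_of_pos (c := (b - b') * κ) (d := b - b' + (u 0 - u' 0))
    (mul_pos (by linarith) hκ) (fun x hx => ?_) fun x hx => ?_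
  · rw [bentLine, bentLine, hu.eq_of_nonpos x hx, hu'.eq_of_nonpos x hx, min_eq_left hx]
    ring
  · rw [bentLine, bentLine, min_eq_right hx]
    linarith [(abs_le.mp (hu.abs_le x)).1, (abs_le.mp (hu'.abs_le x)).2]

lemma crossOnce_bentLine {m n : ℕ} {q q' : Fin m × Fin n} (hne : q ≠ q') (hu : IsSmallWiggle u)
    (hu' : IsSmallWiggle u') :
    CrossOnce (bentLine (1 / (4 * n)) q.1 q.2 u) (bentLine (1 / (4 * n)) q'.1 q'.2 u') := by
  have add_one_le {k : ℕ} {i j : Fin k} (hij : i < j) : ((i : ℕ) : ℝ) + 1 ≤ (j : ℕ) := by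
    exact_mod_cast hij
  obtain ⟨a, b⟩ := q
  obtain ⟨a', b'⟩ := q'
  have hn : (0 : ℝ) < n := by exact_mod_cast b.pos
  have hbend (b b' : Fin n) : |((b : ℕ) : ℝ) - (b' : ℕ)| * (1 / (4 * n)) ≤ 1 / 4 := by
    have : |((b : ℕ) : ℝ) - (b' : ℕ)| ≤ n :=
      abs_sub_le_of_nonneg_of_le (Nat.cast_nonneg _) (by exact_mod_cast b.2.le)
        (Nat.cast_nonneg _) (by exact_mod_cast b'.2.le)
    calc |((b : ℕ) : ℝ) - (b' : ℕ)| * (1 / (4 * n)) ≤ n * (1 / (4 * n)) := by gcongr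
      _ = 1 / 4 := by field_simp
  rcases lt_trichotomy a a' with ha | rfl | ha
  · exact Or.inr <| crossUp_bentLine_of_slope_lt hu' hu (add_one_le ha) (hbend _ _) (by positivity)
  · rcases lt_or_gt_of_ne (fun hb : b = b' => hne (by rw [hb])) with hb | hb
    · exact Or.inr <| crossUp_bentLine_of_lt hu' hu (add_one_le hb) (by positivity)
    · exact Or.inl <| crossUp_bentLine_of_lt hu hu' (add_one_le hb) (by positivity)
  · exact Or.inl <| crossUp_bentLine_of_slope_lt hu hu' (add_one_le ha) (hbend _ _) (by positivity)

/-- The hat function of height `1` supported on `[-1, 1]`. -/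
def hat (x : ℝ) : ℝ := max 0 (1 - |x|)

lemma hat_zero : hat 0 = 1 := by simp [hat]

lemma hat_eq_zero {x : ℝ} (hx : 1 ≤ |x|) : hat x = 0 := max_eq_left (sub_nonpos.mpr hx)

lemma abs_hat_le (x : ℝ) : |hat x| ≤ 1 := by
  rw [hat, abs_of_nonneg (le_max_left _ _)]
  exact max_le zero_le_one (sub_le_self _ (abs_nonneg x))

lemma abs_hat_sub_hat_le (x y : ℝ) : |hat x - hat y| ≤ |x - y| := by
  calc |hat x - hat y| ≤ max |(0 : ℝ) - 0| |1 - |x| - (1 - |y|)| := abs_max_sub_max_le_max _ _ _ _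
    _ = |(|y| - |x|)| := by simp
    _ ≤ |x - y| := by rw [abs_sub_comm x]; exact abs_abs_sub_abs_le y x

lemma exists_interpolation {m : ℕ} (c : Fin m → ℝ) :
    ∃ w : ℝ → ℝ, (∀ x y, |w x - w y| ≤ (∑ i, |c i|) * |x - y|) ∧ (∀ x, |w x| ≤ ∑ i, |c i|) ∧
      (∀ x ≤ 0, w x = 0) ∧ ∀ i : Fin m, w (i + 1) = c i := by
  refine ⟨fun x => ∑ i : Fin m, c i * hat (x - (i + 1)), fun x y => ?_, fun x => ?_,
    fun x _ => ?_, fun i => ?_⟩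
  · rw [← Finset.sum_sub_distrib, Finset.sum_mul]
    refine (Finset.abs_sum_le_sum_abs _ _).trans (Finset.sum_le_sum fun i _ => ?_)
    rw [← mul_sub, abs_mul]
    have hhat := abs_hat_sub_hat_le (x - (i + 1)) (y - (i + 1))
    rw [sub_sub_sub_cancel_right] at hhat
    exact mul_le_mul_of_nonneg_left hhat (abs_nonneg _)
  · refine (Finset.abs_sum_le_sum_abs _ _).trans (Finset.sum_le_sum fun i _ => ?_)
    rw [abs_mul]
    exact mul_le_of_le_one_right (abs_nonneg _) (abs_hat_le _)
  · refine Finset.sum_eq_zero fun i _ => ?_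
    have : (0 : ℝ) ≤ (i : ℕ) := Nat.cast_nonneg _
    rw [hat_eq_zero (by rw [abs_of_neg] <;> linarith), mul_zero]
  · dsimp only
    rw [Finset.sum_eq_single i]
    · rw [sub_self, hat_zero, mul_one]
    · intro j _ hji
      have hij : (1 : ℝ) ≤ |((i : ℕ) : ℝ) - (j : ℕ)| := by
        have : (i : ℤ) - j ≠ 0 := by simpa [sub_eq_zero, Fin.ext_iff, eq_comm] using hji
        exact_mod_cast Int.one_le_abs this
      rw [hat_eq_zero (by simpa using hij), mul_zero]
    · simp

lemma exists_isSmallWiggle (m : ℕ) :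
    ∃ τ > 0, ∀ σ : Fin m → SignType, ∃ w : ℝ → ℝ,
      (∀ t ∈ Ioo 0 τ, IsSmallWiggle fun x => w x + t) ∧ ∀ i : Fin m, w (i + 1) = -(τ * σ i) := by
  have hτ : (0 : ℝ) < 1 / (8 * (m + 1)) := by positivity
  have hmτ : m * (1 / (8 * (m + 1)) : ℝ) + 1 / (8 * (m + 1)) = 1 / 8 := by
    field_simp
  refine ⟨1 / (8 * (m + 1)), hτ, fun σ => ?_⟩
  obtain ⟨w, hlip, hle, hleft, hval⟩ :=
    exists_interpolation fun i => -(1 / (8 * (m + 1)) * (σ i : ℝ))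
  have hsum : ∑ i, |-(1 / (8 * (m + 1)) * (σ i : ℝ))| ≤ m * (1 / (8 * (m + 1))) := by
    have hσ (s : SignType) : |(s : ℝ)| ≤ 1 := by cases s <;> simp
    refine (Finset.sum_le_card_nsmul _ _ _ fun i _ => ?_).trans_eq
      (by rw [Finset.card_univ, Fintype.card_fin, nsmul_eq_mul])
    rw [abs_neg, abs_mul, abs_of_pos hτ]
    exact mul_le_of_le_one_right hτ.le (hσ _)
  refine ⟨w, fun t ht => ⟨fun x y => ?_, fun x => ?_, fun x hx => ?_⟩, hval⟩
  · rw [add_sub_add_right_eq_sub]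
    exact (hlip x y).trans (mul_le_mul_of_nonneg_right (by linarith) (abs_nonneg _))
  · refine (abs_add_le _ _).trans ?_
    rw [abs_of_pos ht.1]
    linarith [hle x, ht.2]
  · rw [hleft x hx, hleft 0 le_rfl]

lemma exists_generic_shift {ι : Type*} [Finite ι] {f : ι → ℝ → ℝ} {τ : ℝ} (hτ : 0 < τ)
    (hf : ∀ i j, i ≠ j → ∀ s ∈ Ioo 0 τ, ∀ t ∈ Ioo 0 τ, {x | f i x + s = f j x + t}.Countable) :
    ∃ t : ι → ℝ, (∀ i, t i ∈ Ioo 0 τ) ∧ ∀ i j k, i ≠ j → i ≠ k → j ≠ k → ∀ x,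
      f i x + t i = f j x + t j → f i x + t i ≠ f k x + t k := by
  classical
  have := Fintype.ofFinite ι
  suffices h : ∀ S : Finset ι, ∃ t : ι → ℝ, (∀ i, t i ∈ Ioo 0 τ) ∧
      ∀ x y, (S.filter fun i => f i x + t i = y).card ≤ 2 by
    obtain ⟨t, ht, hcard⟩ := h Finset.univ
    refine ⟨t, ht, fun i j k hij hik hjk x hxj hxk => (hcard x (f i x + t i)).not_gt ?_⟩
    exact Finset.two_lt_card.mpr ⟨i, by simp, j, by simp [hxj], k, by simp [hxk], hij, hik, hjk⟩
  intro S
  induction S using Finset.induction_on with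
  | empty => exact ⟨fun _ => τ / 2, fun _ => ⟨by linarith, by linarith⟩, by simp⟩
  | insert a S ha ih =>
    obtain ⟨t, ht, hcard⟩ := ih
    let bad : Set ℝ := ⋃ (i) (j) (_ : i ≠ j),
      (fun x => f i x + t i - f a x) '' {x | f i x + t i = f j x + t j}
    have hbad : bad.Countable := countable_iUnion fun i => countable_iUnion fun j =>
      countable_iUnion fun hij => (hf i j hij _ (ht i) _ (ht j)).image _
    obtain ⟨c, hc, hcτ⟩ := (hbad.dense_compl ℝ).exists_between hτ
    refine ⟨Function.update t a c, fun i => ?_, fun x y => ?_⟩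
    · rcases eq_or_ne i a with rfl | hia
      · rwa [Function.update_self]
      · rw [Function.update_of_ne hia]
        exact ht i
    · have hS : (S.filter fun i => f i x + Function.update t a c i = y) =
          S.filter fun i => f i x + t i = y :=
        Finset.filter_congr fun i hi => by
          rw [Function.update_of_ne (ne_of_mem_of_not_mem hi ha)]
      rw [Finset.filter_insert, hS, Function.update_self]
      split_ifs with hay
      · have hone : (S.filter fun i => f i x + t i = y).card ≤ 1 := by
          refine Finset.card_le_one.mpr fun i hi j hj => of_not_not fun hij => hc ?_
          rw [Finset.mem_filter] at hi hj
          simp only [bad, mem_iUnion]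
          exact ⟨i, j, hij, x, hi.2.trans hj.2.symm, by linarith [hi.2]⟩
        exact (Finset.card_insert_le _ _).trans (Nat.add_le_add_right hone 1)
      · exact hcard x y

lemma sign_mul_sub_of_mem_Ioo {s : SignType} (hs : s ≠ 0) {τ t : ℝ} (ht : t ∈ Ioo 0 τ) :
    SignType.sign (τ * s - t) = s := by
  cases s
  · exact absurd rfl hs
  · exact sign_neg (by simp; linarith [ht.1, ht.2])
  · exact sign_pos (by simp; linarith [ht.2])

theorem exists_graphs_with_grid_signs {l m n : ℕ} {σ : Fin m × Fin n → Fin l → SignType}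
    (hσ : ∀ q i, σ q i ≠ 0) :
    ∃ f : Fin m × Fin n → ℝ → ℝ, (∀ q, Continuous (f q)) ∧
      (Pairwise fun q q' => CrossOnce (f q) (f q')) ∧
      (∀ q q' q'', q ≠ q' → q ≠ q'' → q' ≠ q'' → ∀ x, f q x = f q' x → f q x ≠ f q'' x) ∧
      ∀ q (i : Fin l), SignType.sign (((q.1 : ℕ) : ℝ) * ((i : ℕ) + 1) + (q.2 : ℕ) -
        f q ((i : ℕ) + 1)) = σ q i := by
  obtain ⟨τ, hτ, hw⟩ := exists_isSmallWiggle l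
  choose w hwiggle hval using fun q => hw (σ q)
  let line (q : Fin m × Fin n) (t : ℝ) : ℝ → ℝ :=
    bentLine (1 / (4 * n)) q.1 q.2 fun x => w q x + t
  have hcross (q q') (hne : q ≠ q') (s) (hs : s ∈ Ioo 0 τ) (t) (ht : t ∈ Ioo 0 τ) :
      CrossOnce (line q s) (line q' t) :=
    crossOnce_bentLine hne (hwiggle q s hs) (hwiggle q' t ht)
  have hshift (q t x) : line q t x = bentLine (1 / (4 * n)) q.1 q.2 (w q) x + t :=
    (add_assoc _ _ _).symm
  obtain ⟨t, ht, hsimple⟩ := exists_generic_shift hτ fun q q' hne s hs t ht => by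
    have hsub : {x | line q s x = line q' t x}.Subsingleton :=
      fun x hx y hy => (hcross q q' hne s hs t ht).eq_of_apply_eq hx hy
    simpa only [hshift] using hsub.countable
  refine ⟨fun q => line q (t q), fun q => continuous_bentLine (hwiggle q _ (ht q)).continuous,
    fun q q' hne => hcross q q' hne _ (ht q) _ (ht q'), by simpa only [hshift] using hsimple,
    fun q i => ?_⟩
  rw [← sign_mul_sub_of_mem_Ioo (hσ q i) (ht q)]
  dsimp only
  rw [hshift, bentLine, hval, min_eq_right (by positivity)]
  congr 1
  ring

end Grid

section Incidences

open MvPolynomial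

variable {P C I : Type*}

/-- The value of `circEq` of the circle `c` at the point `p`, as a polynomial in the coordinates of
all points and the coefficients of all circles. -/
noncomputable def incidencePoly (p : P) (c : C) : MvPolynomial (P × Fin 2 ⊕ C × Fin 4) ℝ :=
  X (.inr (c, 0)) * (X (.inl (p, 0)) ^ 2 + X (.inl (p, 1)) ^ 2) +
    X (.inr (c, 1)) * X (.inl (p, 0)) + X (.inr (c, 2)) * X (.inl (p, 1)) + X (.inr (c, 3))

lemma eval_incidencePoly (x : P × Fin 2 ⊕ C × Fin 4 → ℝ) (p : P) (c : C) :
    eval x (incidencePoly p c) =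
      circEq (fun j => x (.inr (c, j))) !₂[x (.inl (p, 0)), x (.inl (p, 1))] := by
  simp [incidencePoly, circEq]

lemma totalDegree_incidencePoly_le (p : P) (c : C) : (incidencePoly p c).totalDegree ≤ 3 := by
  have hmul (i j : P × Fin 2 ⊕ C × Fin 4) :
      (X i * X j : MvPolynomial (P × Fin 2 ⊕ C × Fin 4) ℝ).totalDegree ≤ 3 :=
    (totalDegree_mul _ _).trans (by simp)
  have hsq : (X (.inl (p, 0)) ^ 2 + X (.inl (p, 1)) ^ 2 :
      MvPolynomial (P × Fin 2 ⊕ C × Fin 4) ℝ).totalDegree ≤ 2 :=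
    (totalDegree_add _ _).trans (by simp)
  unfold incidencePoly
  refine (totalDegree_add _ _).trans (max_le ?_ (by simp))
  refine (totalDegree_add _ _).trans (max_le ?_ (hmul _ _))
  refine (totalDegree_add _ _).trans (max_le ?_ (hmul _ _))
  exact (totalDegree_mul _ _).trans (by rw [totalDegree_X]; lia)

theorem two_pow_card_le_of_forall_exists_sign_circEq_eq [Fintype P] [Fintype C] [Fintype I]
    {p : I → P} {c : I → C}
    (h : ∀ σ : I → SignType, (∀ i, σ i ≠ 0) →
      ∃ (z : P → Plane) (k : C → Fin 4 → ℝ),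
        ∀ i, SignType.sign (circEq (k (c i)) (z (p i))) = σ i) :
    2 ^ Fintype.card I ≤
      ((2 * Fintype.card P + 4 * Fintype.card C) * (3 * Fintype.card I + 2) + 1) ^
        (2 * Fintype.card P + 4 * Fintype.card C) := by
  have hcard : Fintype.card (P × Fin 2 ⊕ C × Fin 4) = 2 * Fintype.card P + 4 * Fintype.card C := by
    simp [mul_comm]
  have hdegree : ∑ i, (incidencePoly (p i) (c i)).totalDegree ≤ 3 * Fintype.card I :=
    (Finset.sum_le_card_nsmul _ _ 3 fun i _ => totalDegree_incidencePoly_le _ _).trans_eq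
      (by rw [Finset.card_univ, smul_eq_mul, mul_comm])
  refine (two_pow_card_le_of_forall_exists_signVector_eq
    (F := fun i => incidencePoly (p i) (c i)) fun σ hσ => ?_).trans ?_
  · obtain ⟨z, k, hzk⟩ := h σ hσ
    refine ⟨Sum.elim (fun v => z v.1 v.2) fun v => k v.1 v.2, funext fun i => ?_⟩
    rw [← hzk i, signVector, eval_incidencePoly]
    rfl
  · rw [hcard]
    gcongr

lemma pow_lt_two_pow {b e M N : ℕ} (hb : b ≤ 2 ^ e) (h : e * N < M) : b ^ N < 2 ^ M :=
  calc b ^ N ≤ (2 ^ e) ^ N := Nat.pow_le_pow_left hb N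
    _ = 2 ^ (e * N) := (pow_mul 2 e N).symm
    _ < 2 ^ M := Nat.pow_lt_pow_right one_lt_two h

theorem exists_grid_signs_ne_sign_circEq :
    ∃ (l m n : ℕ) (σ : Fin m × Fin n → Fin l → SignType), (∀ q i, σ q i ≠ 0) ∧
      ∀ (z : ℕ → ℕ → Plane) (k : Fin m × Fin n → Fin 4 → ℝ),
        ∃ q, ∃ i : Fin l, SignType.sign (circEq (k q) (z i (q.1 * (i + 1) + q.2))) ≠ σ q i := by
  -- The base in the bound below is at most `2 ^ 75`, so `75 * (8 * m ^ 3) < m ^ 4` suffices.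
  obtain ⟨m, hm⟩ : ∃ m : ℕ, m = 2 ^ 10 := ⟨_, rfl⟩
  refine ⟨m, m, m ^ 2, ?_⟩
  by_contra! hall
  have hlt (v : (Fin m × Fin (m ^ 2)) × Fin m) :
      (v.1.1 * (v.2 + 1) + v.1.2 : ℕ) < 2 * m ^ 2 := by
    have : (v.1.1 * (v.2 + 1) : ℕ) ≤ m * m := Nat.mul_le_mul v.1.1.2.le v.2.2
    linarith [v.1.2.2, sq m]
  have hle := two_pow_card_le_of_forall_exists_sign_circEq_eq
    (p := fun v => (v.2, (⟨v.1.1 * (v.2 + 1) + v.1.2, hlt v⟩ : Fin (2 * m ^ 2)))) (c := Prod.fst)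
    fun σ hσ => by
      obtain ⟨z, k, hzk⟩ := hall (fun q i => σ (q, i)) fun q i => hσ (q, i)
      exact ⟨fun v => z v.1 v.2, k, fun v => hzk v.1 v.2⟩
  simp only [Fintype.card_prod, Fintype.card_fin] at hle
  refine hle.not_gt (pow_lt_two_pow (e := 75) ?_ ?_) <;> rw [hm] <;> norm_num

end Incidences

theorem exists_arrangement_not_realizable_by_circles_general :
    ∃ (n : ℕ) (L : Fin n → Set Plane),
      IsArrangement L ∧ IsSimple L ∧
      ¬ ∃ U : Set Plane, IsOpen U ∧
          ∃ γ : Fin n → Set Plane,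
            (∀ i, IsCircle (γ i) ∨ IsLine (γ i)) ∧
            ∃ h : Plane ≃ₜ U, ∀ i, Subtype.val '' (h '' L i) = γ i ∩ U := by
  obtain ⟨l, m, n, σ, hσ, hne⟩ := exists_grid_signs_ne_sign_circEq
  obtain ⟨f, hf, hcross, hsimple, hsign⟩ := exists_graphs_with_grid_signs hσ
  let e : Fin (m * n) ≃ Fin m × Fin n := finProdFinEquiv.symm
  refine ⟨m * n, fun i => graphSet (f (e i)),
    isArrangement_graphSet (fun i => hf _) (hcross.comp_of_injective e.injective),
    isSimple_graphSet fun i j k hij hik hjk =>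
      hsimple _ _ _ (e.injective.ne hij) (e.injective.ne hik) (e.injective.ne hjk), ?_⟩
  rintro ⟨U, hU, γ, hγ, h, himage⟩
  choose k hk using fun q => exists_circEq_sign_eq (hf q) (hγ (e.symm q)) hU h
    (by simpa only [e.apply_symm_apply] using himage (e.symm q))
  obtain ⟨q, i, hqi⟩ := hne (fun i y => h !₂[(i : ℝ) + 1, y]) k
  exact hqi ((hk q _).trans (by simpa using hsign q i))

/-- There exists a simple (non-weak) pseudoline arrangement that
is not realizable by circular arcs: no homeomorphism from the plane onto an open
disk carries the pseudolines to the intersections with the disk of a family of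
circles and straight lines. -/
theorem exists_arrangement_not_realizable_by_circles :
    ∃ (n : ℕ) (L : Fin n → Set Plane),
      IsArrangement L ∧ IsSimple L ∧
      ¬ ∃ (c : Plane) (r : ℝ), 0 < r ∧
          ∃ γ : Fin n → Set Plane,
            (∀ i, IsCircle (γ i) ∨ IsLine (γ i)) ∧
            ∃ h : Plane ≃ₜ ↥(Metric.ball c r),
              ∀ i, Subtype.val '' (h '' L i) = γ i ∩ Metric.ball c r := by
  obtain ⟨n, L, hL, hsimple, hnot⟩ := exists_arrangement_not_realizable_by_circles_general
  exact ⟨n, L, hL, hsimple, fun ⟨_, _, _, h⟩ => hnot ⟨_, Metric.isOpen_ball, h⟩⟩
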